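/- arXiv:2604.02928 — 4 statements merged into one kernel-verified Lean document; each statement's English description precedes it below -/
import Mathlib

section
/- Let X̃ ∈ ℝ^{r×n} be a real matrix, g ∈ ℝ^r a vector, and γ ∈ ℝ with γ ≠ 0. Define the augmented matrix X̃_new = [[X̃, g],[0ᵀ, γ]] ∈ ℝ^{(r+1)×(n+1)} (X̃ with the column (g;γ) appended and a zero row appended below X̃). Then λ_min(X̃_new X̃_newᵀ) ≤ λ_min(X̃ X̃ᵀ) and λ_max(X̃_new X̃_newᵀ) ≥ λ_max(X̃ X̃ᵀ); consequently the spectral condition number of X̃_new X̃_newᵀ is at least that of X̃ X̃ᵀ when X̃ X̃ᵀ is positive definite. -/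
open Matrix

/-- Column vector as an `r × 1` matrix. -/
def colv {r : ℕ} (g : Fin r → ℝ) : Matrix (Fin r) (Fin 1) ℝ :=
  Matrix.of fun i _ => g i

/-- Smallest eigenvalue of a Hermitian (symmetric) real matrix. -/
noncomputable def lmin {ι : Type*} [Fintype ι] [DecidableEq ι]
    (H : Matrix ι ι ℝ) (hH : H.IsHermitian) : ℝ :=
  ⨅ i, hH.eigenvalues i

/-- Largest eigenvalue of a Hermitian (symmetric) real matrix. -/
noncomputable def lmax {ι : Type*} [Fintype ι] [DecidableEq ι]
    (H : Matrix ι ι ℝ) (hH : H.IsHermitian) : ℝ :=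
  ⨆ i, hH.eigenvalues i

/-!
The extreme eigenvalues are the extreme Rayleigh quotients, and for the block matrix
`[[X, G], [0, Γ]]` the quadratic form of the Gram matrix at `(v, t)` is
`‖Xᵀ v‖² + ‖Gᵀ v + Γᵀ t‖²`. At `(v, 0)` it dominates the old form, which bounds the largest
eigenvalue. For the smallest one, take an eigenvector `v` of `X Xᵀ` and choose `(c, t) ≠ 0` with
`c Gᵀ v + Γᵀ t = 0`. These are `card ν` linear conditions on a space of dimension `1 + card μ`, so
such a pair exists as soon as there are at most as many new columns as new rows. The form at
`(c v, t)` is then the old one at `c v`, while the vector has only become longer, and the old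
eigenvalue is nonnegative.
-/

section Rayleigh

open scoped MatrixOrder

variable {ι : Type*} [Fintype ι] [DecidableEq ι] {H : Matrix ι ι ℝ}

theorem lmin_mul_dotProduct_self_le (hH : H.IsHermitian) (w : ι → ℝ) :
    lmin H hH * (w ⬝ᵥ w) ≤ w ⬝ᵥ H *ᵥ w := by
  have loewner : algebraMap ℝ _ (lmin H hH) ≤ H :=
    algebraMap_le_of_le_spectrum (ha := hH.isSelfAdjoint) fun x hx => by
      obtain ⟨i, rfl⟩ := hH.spectrum_real_eq_range_eigenvalues ▸ hx
      exact ciInf_le (Set.finite_range _).bddBelow i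
  simpa [sub_mulVec, Algebra.algebraMap_eq_smul_one, smul_mulVec] using
    (Matrix.le_iff.1 loewner).dotProduct_mulVec_nonneg w

theorem dotProduct_mulVec_le_lmax_mul (hH : H.IsHermitian) (w : ι → ℝ) :
    w ⬝ᵥ H *ᵥ w ≤ lmax H hH * (w ⬝ᵥ w) := by
  have loewner : H ≤ algebraMap ℝ _ (lmax H hH) :=
    le_algebraMap_of_spectrum_le (ha := hH.isSelfAdjoint) fun x hx => by
      obtain ⟨i, rfl⟩ := hH.spectrum_real_eq_range_eigenvalues ▸ hx
      exact le_ciSup (Set.finite_range _).bddAbove i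
  simpa [sub_mulVec, Algebra.algebraMap_eq_smul_one, smul_mulVec] using
    (Matrix.le_iff.1 loewner).dotProduct_mulVec_nonneg w

theorem lmin_le_of_dotProduct_mulVec_le (hH : H.IsHermitian) {w : ι → ℝ} (hw : w ≠ 0) {c : ℝ}
    (h : w ⬝ᵥ H *ᵥ w ≤ c * (w ⬝ᵥ w)) : lmin H hH ≤ c :=
  le_of_mul_le_mul_right ((lmin_mul_dotProduct_self_le hH w).trans h)
    (dotProduct_self_star_pos_iff.2 hw)

theorem le_lmax_of_le_dotProduct_mulVec (hH : H.IsHermitian) {w : ι → ℝ} (hw : w ≠ 0) {c : ℝ}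
    (h : c * (w ⬝ᵥ w) ≤ w ⬝ᵥ H *ᵥ w) : c ≤ lmax H hH :=
  le_of_mul_le_mul_right (h.trans (dotProduct_mulVec_le_lmax_mul hH w))
    (dotProduct_self_star_pos_iff.2 hw)

theorem exists_dotProduct_mulVec_eq_eigenvalues_mul (hH : H.IsHermitian) (i : ι) :
    ∃ v ≠ 0, v ⬝ᵥ H *ᵥ v = hH.eigenvalues i * (v ⬝ᵥ v) := by
  refine ⟨hH.eigenvectorBasis i, ?_, ?_⟩
  · exact (WithLp.ofLp_eq_zero 2).not.2 (hH.eigenvectorBasis.orthonormal.ne_zero i)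
  · rw [hH.mulVec_eigenvectorBasis, dotProduct_smul, smul_eq_mul]

theorem lmin_pos [Nonempty ι] (hH : H.PosDef) : 0 < lmin H hH.isHermitian := by
  obtain ⟨i, hi⟩ := exists_eq_ciInf_of_finite (f := hH.isHermitian.eigenvalues)
  exact (hH.eigenvalues_pos i).trans_eq hi

theorem lmax_nonneg (hH : H.PosSemidef) : 0 ≤ lmax H hH.isHermitian :=
  Real.iSup_nonneg hH.eigenvalues_nonneg

end Rayleigh

section Gram

variable {ι κ : Type*} [Fintype κ]

theorem dotProduct_mul_transpose_mulVec {R : Type*} [CommSemiring R] [Fintype ι]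
    (A : Matrix ι κ R) (w : ι → R) :
    w ⬝ᵥ (A * Aᵀ) *ᵥ w = (w ᵥ* A) ⬝ᵥ (w ᵥ* A) := by
  rw [← mulVec_mulVec, dotProduct_mulVec, mulVec_transpose]

theorem posDef_mul_transpose_iff_linearIndependent_row [Finite ι] {A : Matrix ι κ ℝ} :
    (A * Aᵀ).PosDef ↔ LinearIndependent ℝ A.row := by
  cases nonempty_fintype ι
  rw [← vecMul_injective_iff]
  refine ⟨fun hA => ?_, fun hA => PosDef.mul_conjTranspose_self A hA⟩
  refine (injective_iff_map_eq_zero A.vecMulLinear).2 fun w (hw : w ᵥ* A = 0) => ?_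
  by_contra hne
  have hpos : 0 < w ⬝ᵥ (A * Aᵀ) *ᵥ w := hA.dotProduct_mulVec_pos hne
  simp [dotProduct_mul_transpose_mulVec, hw] at hpos

end Gram

theorem exists_smul_add_vecMul_eq_zero {K μ ν : Type*} [DivisionRing K] [Fintype μ]
    [Fintype ν] (hcard : Fintype.card ν ≤ Fintype.card μ) (u : ν → K) (Γ : Matrix μ ν K) :
    ∃ (c : K) (t : μ → K), (c ≠ 0 ∨ t ≠ 0) ∧ c • u + t ᵥ* Γ = 0 := by
  let f : K × (μ → K) →ₗ[K] ν → K := (LinearMap.toSpanSingleton K _ u).coprod Γ.vecMulLinear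
  have hf : LinearMap.ker f ≠ ⊥ := LinearMap.ker_ne_bot_of_finrank_lt <| by
    simpa [Nat.lt_one_add_iff] using hcard
  obtain ⟨⟨c, t⟩, hker, hne⟩ := (Submodule.ne_bot_iff _).1 hf
  exact ⟨c, t, by simpa [Prod.ext_iff, imp_iff_not_or] using hne, by simpa [f] using hker⟩

section BlockTriangular

variable {ι κ μ ν : Type*}

theorem linearIndependent_row_fromBlocks {R : Type*} [Ring R] [Finite ι] [Finite μ]
    {X : Matrix ι κ R} (G : Matrix ι ν R) {Γ : Matrix μ ν R} (hX : LinearIndependent R X.row)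
    (hΓ : LinearIndependent R Γ.row) :
    LinearIndependent R (fromBlocks X G 0 Γ).row := by
  cases nonempty_fintype ι
  cases nonempty_fintype μ
  rw [← vecMul_injective_iff] at hX hΓ ⊢
  refine (injective_iff_map_eq_zero (fromBlocks X G 0 Γ).vecMulLinear).2 fun w hw => ?_
  obtain ⟨hleft, hright⟩ :
      (w ∘ Sum.inl) ᵥ* X = 0 ∧ (w ∘ Sum.inl) ᵥ* G + (w ∘ Sum.inr) ᵥ* Γ = 0 := by
    simpa [vecMul_fromBlocks, ← Sum.elim_zero_zero, Sum.elim_eq_iff] using hw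
  have hinl : w ∘ Sum.inl = 0 := hX (hleft.trans (zero_vecMul X).symm)
  have hinr : w ∘ Sum.inr = 0 := hΓ <| by simpa [hinl] using hright
  rw [← Sum.elim_comp_inl_inr w, hinl, hinr, Sum.elim_zero_zero]

variable [Fintype ι] [Fintype κ] [Fintype μ] [Fintype ν]

theorem sumElim_dotProduct_fromBlocks_mul_transpose_mulVec {R : Type*} [CommSemiring R]
    (X : Matrix ι κ R) (G : Matrix ι ν R) (Γ : Matrix μ ν R) (v : ι → R) (t : μ → R) :
    Sum.elim v t ⬝ᵥ (fromBlocks X G 0 Γ * (fromBlocks X G 0 Γ)ᵀ) *ᵥ Sum.elim v t =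
      v ⬝ᵥ (X * Xᵀ) *ᵥ v + (v ᵥ* G + t ᵥ* Γ) ⬝ᵥ (v ᵥ* G + t ᵥ* Γ) := by
  simp [dotProduct_mul_transpose_mulVec, vecMul_fromBlocks]

variable [DecidableEq ι] [DecidableEq μ] [Nonempty ι]
  (X : Matrix ι κ ℝ) (G : Matrix ι ν ℝ) (Γ : Matrix μ ν ℝ)
  (hOld : (X * Xᵀ).IsHermitian)
  (hNew : (fromBlocks X G 0 Γ * (fromBlocks X G 0 Γ)ᵀ).IsHermitian)

theorem lmin_fromBlocks_mul_transpose_le (hcard : Fintype.card ν ≤ Fintype.card μ) :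
    lmin _ hNew ≤ lmin (X * Xᵀ) hOld := by
  refine le_ciInf fun i => ?_
  obtain ⟨v, hv, hquad⟩ := exists_dotProduct_mulVec_eq_eigenvalues_mul hOld i
  obtain ⟨c, t, hct, hker⟩ := exists_smul_add_vecMul_eq_zero hcard (v ᵥ* G) Γ
  have hw : Sum.elim (c • v) t ≠ 0 := by
    rw [← Sum.elim_zero_zero, Ne, Sum.elim_eq_iff, smul_eq_zero_iff_left hv]
    tauto
  have hnonneg : 0 ≤ hOld.eigenvalues i := eigenvalues_self_mul_conjTranspose_nonneg X i
  refine lmin_le_of_dotProduct_mulVec_le hNew hw ?_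
  calc Sum.elim (c • v) t ⬝ᵥ _ *ᵥ Sum.elim (c • v) t
      = hOld.eigenvalues i * (c • v ⬝ᵥ c • v) := by
        rw [sumElim_dotProduct_fromBlocks_mul_transpose_mulVec, smul_vecMul, hker]
        simp only [mulVec_smul, smul_dotProduct, dotProduct_smul, hquad, smul_eq_mul,
          dotProduct_zero]
        ring
    _ ≤ hOld.eigenvalues i * (c • v ⬝ᵥ c • v + t ⬝ᵥ t) := by
        gcongr
        exact le_add_of_nonneg_right (dotProduct_self_star_nonneg t)
    _ = hOld.eigenvalues i * (Sum.elim (c • v) t ⬝ᵥ Sum.elim (c • v) t) := by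
        rw [sumElim_dotProduct_sumElim]

theorem lmax_le_lmax_fromBlocks_mul_transpose : lmax (X * Xᵀ) hOld ≤ lmax _ hNew := by
  refine ciSup_le fun i => ?_
  obtain ⟨v, hv, hquad⟩ := exists_dotProduct_mulVec_eq_eigenvalues_mul hOld i
  have hw : Sum.elim v (0 : μ → ℝ) ≠ 0 := by
    rw [← Sum.elim_zero_zero, Ne, Sum.elim_eq_iff]
    tauto
  refine le_lmax_of_le_dotProduct_mulVec hNew hw ?_
  rw [sumElim_dotProduct_fromBlocks_mul_transpose_mulVec, sumElim_dotProduct_sumElim,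
    hquad, zero_dotProduct, add_zero]
  exact le_add_of_nonneg_right (dotProduct_self_star_nonneg _)

end BlockTriangular

theorem stmt0_general {ι κ μ ν : Type*} [Fintype ι] [Fintype κ] [Fintype μ] [Fintype ν]
    [DecidableEq ι] [DecidableEq μ] [Nonempty ι] (hcard : Fintype.card ν ≤ Fintype.card μ)
    (X : Matrix ι κ ℝ) (G : Matrix ι ν ℝ) (Γ : Matrix μ ν ℝ) (Xnew : Matrix (ι ⊕ μ) (κ ⊕ ν) ℝ)
    (hXnew : Xnew = fromBlocks X G 0 Γ)
    (hOld : (X * Xᵀ).IsHermitian) (hNew : (Xnew * Xnewᵀ).IsHermitian) :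
    lmin (Xnew * Xnewᵀ) hNew ≤ lmin (X * Xᵀ) hOld ∧
    lmax (X * Xᵀ) hOld ≤ lmax (Xnew * Xnewᵀ) hNew ∧
    ((X * Xᵀ).PosDef → LinearIndependent ℝ Γ.row →
      lmax (X * Xᵀ) hOld / lmin (X * Xᵀ) hOld ≤
        lmax (Xnew * Xnewᵀ) hNew / lmin (Xnew * Xnewᵀ) hNew) := by
  subst hXnew
  have hmin := lmin_fromBlocks_mul_transpose_le X G Γ hOld hNew hcard
  have hmax := lmax_le_lmax_fromBlocks_mul_transpose X G Γ hOld hNew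
  refine ⟨hmin, hmax, fun hX hΓ => ?_⟩
  have hpos : (fromBlocks X G 0 Γ * (fromBlocks X G 0 Γ)ᵀ).PosDef :=
    posDef_mul_transpose_iff_linearIndependent_row.2 <|
      linearIndependent_row_fromBlocks G (posDef_mul_transpose_iff_linearIndependent_row.1 hX) hΓ
  exact div_le_div₀ (lmax_nonneg hpos.posSemidef) hmax (lmin_pos hpos) hmin

/-- appending the column `(g; γ)` (with `γ ≠ 0`) and a zero row to `X̃`
can only decrease `λ_min(X̃X̃ᵀ)` and increase `λ_max(X̃X̃ᵀ)`; consequently the spectral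
condition number of `X̃X̃ᵀ` does not decrease when `X̃X̃ᵀ` is positive definite. -/
theorem stmt0 {r n : ℕ} (hr : 0 < r)
    (X : Matrix (Fin r) (Fin n) ℝ) (g : Fin r → ℝ) (γ : ℝ) (hγ : γ ≠ 0)
    (Xnew : Matrix (Fin r ⊕ Fin 1) (Fin n ⊕ Fin 1) ℝ)
    (hXnew : Xnew = Matrix.fromBlocks X (colv g) 0 (Matrix.of fun _ _ => γ))
    (hOld : (X * Xᵀ).IsHermitian) (hNew : (Xnew * Xnewᵀ).IsHermitian) :
    lmin (Xnew * Xnewᵀ) hNew ≤ lmin (X * Xᵀ) hOld ∧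
    lmax (X * Xᵀ) hOld ≤ lmax (Xnew * Xnewᵀ) hNew ∧
    ((X * Xᵀ).PosDef →
      lmax (X * Xᵀ) hOld / lmin (X * Xᵀ) hOld ≤
        lmax (Xnew * Xnewᵀ) hNew / lmin (Xnew * Xnewᵀ) hNew) := by
  have : Nonempty (Fin r) := ⟨⟨0, hr⟩⟩
  obtain ⟨hmin, hmax, hcond⟩ := stmt0_general le_rfl X _ _ Xnew hXnew hOld hNew
  exact ⟨hmin, hmax, fun hX => hcond hX (.of_subsingleton 0 (Function.ne_iff.2 ⟨0, hγ⟩))⟩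
end

section
/- Let Q_x ∈ ℝ^{m×r_x} and Q_y ∈ ℝ^{m×r_y} have orthonormal columns, let X̃ ∈ ℝ^{r_x×n} have full row rank, and let Ỹ ∈ ℝ^{r_y×n}. Set M = Ỹ X̃ᵀ(X̃ X̃ᵀ)⁻¹ and A_ex = Q_y M Q_xᵀ. If w ∈ ℝ^{r_x} and λ ∈ ℝ satisfy (Q_xᵀ Q_y) M w = λ w, then the Exact DMD vector z = Q_y M w satisfies A_ex z = λ z; hence if z ≠ 0 it is an eigenvector of A_ex with eigenvalue λ. -/
open Matrix

/-!
If `(g ∘ f) v = μ v`, then `(f ∘ g) (f v) = f ((g ∘ f) v) = μ f v`.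
Exact DMD is the case `f = Qy M`, `g = Qxᵀ`: then `g ∘ f` is the reduced operator `Qxᵀ Qy M`,
`f ∘ g` is `Qy M Qxᵀ`, and `f w` is the Exact DMD vector.
-/

theorem map_mem_eigenspace_comp {R V W : Type*} [CommRing R] [AddCommGroup V] [Module R V]
    [AddCommGroup W] [Module R W] (f : V →ₗ[R] W) (g : W →ₗ[R] V) {μ : R} {v : V}
    (hv : v ∈ Module.End.eigenspace (g ∘ₗ f) μ) :
    f v ∈ Module.End.eigenspace (f ∘ₗ g) μ := by
  rw [Module.End.mem_eigenspace_iff, LinearMap.comp_apply] at hv ⊢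
  rw [hv, map_smul]

section Matrix

variable {R m n : Type*} [CommRing R] [Fintype m] [Fintype n]

theorem mulVec_mem_eigenspace_mulVecLin_mul (B : Matrix m n R) (C : Matrix n m R) {μ : R}
    {v : n → R} (hv : v ∈ Module.End.eigenspace (C * B).mulVecLin μ) :
    B *ᵥ v ∈ Module.End.eigenspace (B * C).mulVecLin μ := by
  rw [mulVecLin_mul] at hv ⊢
  exact map_mem_eigenspace_comp B.mulVecLin C.mulVecLin hv

theorem stmt4_general {k : Type*} [Fintype k] (Qx : Matrix m n R) (Qy : Matrix m k R)
    (M : Matrix k n R) {w : n → R} {μ : R} (hw : (Qxᵀ * Qy * M) *ᵥ w = μ • w) :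
    (Qy * M * Qxᵀ) *ᵥ (Qy *ᵥ (M *ᵥ w)) = μ • Qy *ᵥ (M *ᵥ w) ∧
    (Qy *ᵥ (M *ᵥ w) ≠ 0 →
      Module.End.HasEigenvector (Qy * M * Qxᵀ).mulVecLin μ (Qy *ᵥ (M *ᵥ w))) := by
  have hreduced : w ∈ Module.End.eigenspace (Qxᵀ * (Qy * M)).mulVecLin μ := by
    rwa [Module.End.mem_eigenspace_iff, mulVecLin_apply, ← Matrix.mul_assoc]
  have hfull : Qy *ᵥ (M *ᵥ w) ∈ Module.End.eigenspace (Qy * M * Qxᵀ).mulVecLin μ := by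
    rw [mulVec_mulVec]
    exact mulVec_mem_eigenspace_mulVecLin_mul (Qy * M) Qxᵀ hreduced
  exact ⟨Module.End.mem_eigenspace_iff.mp hfull, fun hz => ⟨hfull, hz⟩⟩

end Matrix

/-- the Exact DMD vector `z = Q_y M w` associated with an eigenpair
`((Q_xᵀQ_y)M) w = λ w` satisfies `A_ex z = λ z` for `A_ex = Q_y M Q_xᵀ`
with `M = ỸX̃ᵀ(X̃X̃ᵀ)⁻¹`; hence if `z ≠ 0` it is an eigenvector of `A_ex`. -/
theorem stmt4 {m rx ry n : ℕ}
    (Qx : Matrix (Fin m) (Fin rx) ℝ) (hQx : Qxᵀ * Qx = 1)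
    (Qy : Matrix (Fin m) (Fin ry) ℝ) (hQy : Qyᵀ * Qy = 1)
    (X : Matrix (Fin rx) (Fin n) ℝ) (hX : IsUnit (X * Xᵀ).det)
    (Y : Matrix (Fin ry) (Fin n) ℝ)
    (M : Matrix (Fin ry) (Fin rx) ℝ) (hM : M = Y * Xᵀ * (X * Xᵀ)⁻¹)
    (Aex : Matrix (Fin m) (Fin m) ℝ) (hA : Aex = Qy * M * Qxᵀ)
    (w : Fin rx → ℝ) (lam : ℝ)
    (hw : ((Qxᵀ * Qy) * M).mulVec w = lam • w) :
    Aex.mulVec (Qy.mulVec (M.mulVec w)) = lam • Qy.mulVec (M.mulVec w) ∧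
    (Qy.mulVec (M.mulVec w) ≠ 0 →
      Module.End.HasEigenvector (Matrix.mulVecLin Aex) lam (Qy.mulVec (M.mulVec w))) := by
  subst hA
  exact stmt4_general Qx Qy M hw
end

section
/- Generalized Sherman–Morrison DMD update, basis-expanding case. Let Ŝ ∈ ℝ^{r×n} have full row rank, set G = Ŝ Ŝᵀ, let S̃_y ∈ ℝ^{p×n}, and set Ã = (S̃_y Ŝᵀ) G⁻¹. Let g_x ∈ ℝ^r, γ_x ≠ 0, g_y ∈ ℝ^p. Define X̃_new = [[Ŝ, g_x],[0ᵀ, γ_x]] ∈ ℝ^{(r+1)×(n+1)} and Ỹ_new = [S̃_y, g_y] ∈ ℝ^{p×(n+1)}. Then G_new = X̃_new X̃_newᵀ is invertible and (Ỹ_new X̃_newᵀ) G_new⁻¹ = [Ã, (g_y − Ã g_x)/γ_x], i.e. the updated matrix is Ã with the column (g_y − Ã g_x)/γ_x appended. -/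
open Matrix

/-! Write `X = [[S, C], [0, D]]`. The matrix `B = [A, (Z - A C) D⁻¹]` satisfies `B X = [A S, Z]`: it
reproduces the appended column `Z` exactly, and hence solves the updated normal equation as soon as
`A` solves the original one. Of the transposed factor `Xᵀ` only its block lower triangular shape
matters, so it may be replaced by any `W = [[T, 0], [E, F]]`. The matrix `X W` is invertible because
it factors as `[[1, C], [0, D]] [[S T, 0], [E, F]]`. -/

section BlockUpdate

variable {R k m n q : Type*} [CommRing R] [Fintype m] [Fintype q] [DecidableEq q]

lemma fromCols_sub_mul_inv_mul_fromBlocks_zero₂₁ (A : Matrix k m R) (S : Matrix m n R)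
    (C : Matrix m q R) {D : Matrix q q R} (hD : IsUnit D.det) (Z : Matrix k q R) :
    fromCols A ((Z - A * C) * D⁻¹) * fromBlocks S C 0 D = fromCols (A * S) Z := by
  rw [fromCols_mul_fromBlocks, nonsing_inv_mul_cancel_right _ _ hD, Matrix.mul_zero, add_zero,
    add_sub_cancel]

variable [Fintype n] [DecidableEq m]

lemma det_fromBlocks_zero₂₁_mul_fromBlocks_zero₁₂ (S : Matrix m n R) (T : Matrix n m R)
    (C : Matrix m q R) (E : Matrix q m R) (D F : Matrix q q R) :
    (fromBlocks S C 0 D * fromBlocks T 0 E F).det = D.det * (S * T).det * F.det := by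
  have factor : fromBlocks S C 0 D * fromBlocks T 0 E F =
      fromBlocks 1 C 0 D * fromBlocks (S * T) 0 E F := by
    simp only [fromBlocks_multiply, Matrix.one_mul, Matrix.zero_mul, Matrix.mul_zero]
  rw [factor, det_mul, det_fromBlocks_zero₂₁, det_fromBlocks_zero₁₂, det_one, one_mul, mul_assoc]

theorem stmt15_general {S : Matrix m n R} {T : Matrix n m R} (hST : IsUnit (S * T).det)
    {D F : Matrix q q R} (hD : IsUnit D.det) (hF : IsUnit F.det) (C : Matrix m q R)
    (E : Matrix q m R) (Y : Matrix k n R) (Z : Matrix k q R) {A : Matrix k m R}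
    (hA : A = Y * T * (S * T)⁻¹) :
    IsUnit (fromBlocks S C 0 D * fromBlocks T 0 E F).det ∧
    fromCols Y Z * fromBlocks T 0 E F * (fromBlocks S C 0 D * fromBlocks T 0 E F)⁻¹ =
      fromCols A ((Z - A * C) * D⁻¹) := by
  have gram_isUnit : IsUnit (fromBlocks S C 0 D * fromBlocks T 0 E F).det := by
    rw [det_fromBlocks_zero₂₁_mul_fromBlocks_zero₁₂]
    exact (hD.mul hST).mul hF
  have normal_eq : A * S * T = Y * T := by
    rw [hA, Matrix.mul_assoc, nonsing_inv_mul_cancel_right _ _ hST]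
  have normal_eq_new : fromCols Y Z * fromBlocks T 0 E F =
      fromCols A ((Z - A * C) * D⁻¹) * (fromBlocks S C 0 D * fromBlocks T 0 E F) := by
    rw [← Matrix.mul_assoc, fromCols_sub_mul_inv_mul_fromBlocks_zero₂₁ A S C hD Z]
    simp only [fromCols_mul_fromBlocks, normal_eq, Matrix.mul_zero]
  exact ⟨gram_isUnit, by rw [normal_eq_new, mul_nonsing_inv_cancel_right _ _ gram_isUnit]⟩

end BlockUpdate

lemma mul_inv_of_const {K m u : Type*} [Field K] [Subsingleton u] [Fintype u] [DecidableEq u]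
    (M : Matrix m u K) (c : K) : M * (of fun _ _ => c : Matrix u u K)⁻¹ = c⁻¹ • M := by
  rw [inv_subsingleton, smul_eq_mul_diagonal]
  simp only [of_apply, Ring.inverse_eq_inv']

lemma mul_colv {p r : ℕ} (A : Matrix (Fin p) (Fin r) ℝ) (g : Fin r → ℝ) :
    A * colv g = colv (A *ᵥ g) :=
  (replicateCol_mulVec A g).symm

lemma colv_smul_sub {p : ℕ} (c : ℝ) (g h : Fin p → ℝ) :
    colv (c • (g - h)) = c • (colv g - colv h) :=
  rfl

/-- generalized Sherman–Morrison DMD update, basis-expanding case.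
With `Ŝ` of full row rank, `G = ŜŜᵀ`, `Ã = (S̃_yŜᵀ)G⁻¹`, `γ_x ≠ 0`,
`X̃_new = [[Ŝ, g_x],[0ᵀ, γ_x]]` and `Ỹ_new = [S̃_y, g_y]`, the matrix
`G_new = X̃_new X̃_newᵀ` is invertible and
`(Ỹ_new X̃_newᵀ)G_new⁻¹ = [Ã, (g_y − Ãg_x)/γ_x]`. -/
theorem stmt15 {r n p : ℕ}
    (S : Matrix (Fin r) (Fin n) ℝ) (hS : IsUnit (S * Sᵀ).det)
    (Sy : Matrix (Fin p) (Fin n) ℝ)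
    (A : Matrix (Fin p) (Fin r) ℝ) (hA : A = Sy * Sᵀ * (S * Sᵀ)⁻¹)
    (gx : Fin r → ℝ) (γx : ℝ) (hγx : γx ≠ 0) (gy : Fin p → ℝ)
    (Xnew : Matrix (Fin r ⊕ Fin 1) (Fin n ⊕ Fin 1) ℝ)
    (hXnew : Xnew = Matrix.fromBlocks S (colv gx) 0 (Matrix.of fun _ _ => γx))
    (Ynew : Matrix (Fin p) (Fin n ⊕ Fin 1) ℝ)
    (hYnew : Ynew = Matrix.fromCols Sy (colv gy)) :
    IsUnit (Xnew * Xnewᵀ).det ∧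
    Ynew * Xnewᵀ * (Xnew * Xnewᵀ)⁻¹ =
      Matrix.fromCols A (colv (γx⁻¹ • (gy - A.mulVec gx))) := by
  have hD : IsUnit (of fun _ _ => γx : Matrix (Fin 1) (Fin 1) ℝ).det := by simpa using hγx
  rw [hXnew, hYnew, fromBlocks_transpose, transpose_zero, colv_smul_sub, ← mul_colv,
    ← mul_inv_of_const]
  exact stmt15_general hS hD (isUnit_det_transpose _ hD) _ _ _ _ hA
end

section
/- Generalized Sherman–Morrison DMD update, rank-preserving case. Let G ∈ ℝ^{r×r} be symmetric positive definite, let G_{y,x} ∈ ℝ^{p×r}, set Ã = G_{y,x} G⁻¹, and let g ∈ ℝ^r, g_y ∈ ℝ^p. Set α = 1 + gᵀ G⁻¹ g. Then G + g gᵀ is invertible and (G_{y,x} + g_y gᵀ)(G + g gᵀ)⁻¹ = Ã − (1/α)(Ã g − g_y) gᵀ G⁻¹. -/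
open Matrix

/-!
Write `α = 1 + vᵀG⁻¹u`. The row vector `vᵀG⁻¹` is mapped by the updated matrix `G + uvᵀ` to `αvᵀ`,
and `det (G + uvᵀ) = α det G`, so that for a unit `α` the updated matrix is invertible and
`vᵀ(G + uvᵀ)⁻¹ = α⁻¹vᵀG⁻¹`. Moreover, if `B = AG`, then
`B + wvᵀ = A(G + uvᵀ) - (Au - w)vᵀ`. Multiplying by `(G + uvᵀ)⁻¹` on the right gives the update
formula. When `G` is positive definite and `u = v`, the quadratic form `vᵀG⁻¹v` is nonnegative,
hence `α` is nonzero.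
-/

theorem one_add_dotProduct_mulVec_pos {n R : Type*} [Fintype n] [Ring R] [PartialOrder R]
    [StarRing R] [StarOrderedRing R] [Nontrivial R] {M : Matrix n n R} (hM : M.PosSemidef)
    (x : n → R) : 0 < 1 + star x ⬝ᵥ M *ᵥ x :=
  add_pos_of_pos_of_nonneg one_pos (hM.dotProduct_mulVec_nonneg x)

theorem mul_add_vecMulVec_eq_sub {l m n R : Type*} [Fintype m] [NonUnitalRing R]
    (A : Matrix l m R) (G : Matrix m n R) (u : m → R) (v : n → R) (w : l → R) :
    A * G + vecMulVec w v = A * (G + vecMulVec u v) - vecMulVec (A *ᵥ u - w) v := by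
  rw [Matrix.mul_add, mul_vecMulVec, sub_vecMulVec]
  abel

section RankOneUpdate

variable {m n R : Type*} [Fintype n] [DecidableEq n] [CommRing R] {G : Matrix n n R}

theorem det_add_vecMulVec (hG : IsUnit G.det) (u v : n → R) :
    (G + vecMulVec u v).det = G.det * (1 + v ⬝ᵥ G⁻¹ *ᵥ u) := by
  rw [vecMulVec_eq Unit, det_add_replicateCol_mul_replicateRow hG,
    det_unique (n := Unit), Matrix.add_apply, one_apply_eq, Matrix.mul_assoc,
    ← replicateCol_mulVec, replicateRow_mul_replicateCol_apply]

theorem isUnit_det_add_vecMulVec_iff (hG : IsUnit G.det) (u v : n → R) :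
    IsUnit (G + vecMulVec u v).det ↔ IsUnit (1 + v ⬝ᵥ G⁻¹ *ᵥ u) := by
  rw [det_add_vecMulVec hG, IsUnit.mul_iff, and_iff_right hG]

theorem vecMul_inv_vecMul_add_vecMulVec (hG : IsUnit G.det) (u v : n → R) :
    v ᵥ* G⁻¹ ᵥ* (G + vecMulVec u v) = (1 + v ⬝ᵥ G⁻¹ *ᵥ u) • v := by
  rw [vecMul_add, vecMul_vecMul, nonsing_inv_mul _ hG, vecMul_one, vecMul_vecMulVec,
    ← dotProduct_mulVec, add_smul, one_smul]

theorem smul_vecMul_inv_add_vecMulVec (hG : IsUnit G.det) {u v : n → R}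
    (hS : IsUnit (G + vecMulVec u v).det) :
    (1 + v ⬝ᵥ G⁻¹ *ᵥ u) • (v ᵥ* (G + vecMulVec u v)⁻¹) = v ᵥ* G⁻¹ := by
  rw [← smul_vecMul, ← vecMul_inv_vecMul_add_vecMulVec hG, vecMul_vecMul, mul_nonsing_inv _ hS,
    vecMul_one]

theorem stmt16_general (hG : IsUnit G.det) {A B : Matrix m n R} (hA : A = B * G⁻¹)
    (u v : n → R) (w : m → R) {α : Rˣ} (hα : α = 1 + v ⬝ᵥ G⁻¹ *ᵥ u) :
    IsUnit (G + vecMulVec u v).det ∧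
    (B + vecMulVec w v) * (G + vecMulVec u v)⁻¹ =
      A - (↑α⁻¹ : R) • vecMulVec (A *ᵥ u - w) (v ᵥ* G⁻¹) := by
  have hS : IsUnit (G + vecMulVec u v).det :=
    (isUnit_det_add_vecMulVec_iff hG u v).mpr (hα ▸ α.isUnit)
  have hB : A * G = B := by rw [hA, nonsing_inv_mul_cancel_right _ _ hG]
  refine ⟨hS, ?_⟩
  calc
    (B + vecMulVec w v) * (G + vecMulVec u v)⁻¹
        = (A * (G + vecMulVec u v) - vecMulVec (A *ᵥ u - w) v) * (G + vecMulVec u v)⁻¹ := by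
      rw [← mul_add_vecMulVec_eq_sub, hB]
    _ = A - vecMulVec (A *ᵥ u - w) (v ᵥ* (G + vecMulVec u v)⁻¹) := by
      rw [Matrix.sub_mul, mul_nonsing_inv_cancel_right _ _ hS, vecMulVec_mul]
    _ = A - (↑α⁻¹ : R) • vecMulVec (A *ᵥ u - w) (v ᵥ* G⁻¹) := by
      rw [← smul_vecMul_inv_add_vecMulVec hG hS, ← hα, vecMulVec_smul, smul_smul, Units.inv_mul,
        one_smul]

end RankOneUpdate

/-- generalized Sherman–Morrison DMD update, rank-preserving case.
With `G` symmetric positive definite, `Ã = G_{y,x}G⁻¹` and `α = 1 + gᵀG⁻¹g`,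
the matrix `G + ggᵀ` is invertible and
`(G_{y,x} + g_ygᵀ)(G + ggᵀ)⁻¹ = Ã − (1/α)(Ãg − g_y)gᵀG⁻¹`. -/
theorem stmt16 {r p : ℕ}
    (G : Matrix (Fin r) (Fin r) ℝ) (hG : G.PosDef)
    (Gyx : Matrix (Fin p) (Fin r) ℝ)
    (A : Matrix (Fin p) (Fin r) ℝ) (hA : A = Gyx * G⁻¹)
    (g : Fin r → ℝ) (gy : Fin p → ℝ)
    (α : ℝ) (hα : α = 1 + g ⬝ᵥ G⁻¹.mulVec g) :
    IsUnit (G + Matrix.vecMulVec g g).det ∧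
    (Gyx + Matrix.vecMulVec gy g) * (G + Matrix.vecMulVec g g)⁻¹ =
      A - α⁻¹ • Matrix.vecMulVec (A.mulVec g - gy) (Matrix.vecMul g G⁻¹) := by
  have hα0 : α ≠ 0 := hα ▸ (one_add_dotProduct_mulVec_pos hG.inv.posSemidef g).ne'
  exact stmt16_general hG.det_pos.ne'.isUnit hA g g gy (α := Units.mk0 α hα0) hα
end
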